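/- Let n ≥ 1 and let a > 0 be real. Let Φ : ℂⁿ → ℂ be holomorphic on an open set containing the tube T = {z ∈ ℂⁿ : −a ≤ Im z_k ≤ a for all k}; assume that for every w ∈ [−a, a]ⁿ the function v ↦ Φ(v + iw) is Lebesgue integrable on ℝⁿ, and that Φ(z) → 0 as ‖Re z‖ → ∞ uniformly for z ∈ T. Define p(x) = (2π)^{−n} ∫_{ℝⁿ} e^{−i⟨x,v⟩} Φ(v) dv and write 𝐚 = (a,…,a) ∈ ℝⁿ. Then for every x ∈ ℝⁿ, p(x) = (1/(2(2π)^{n})) (cosh⟨x,𝐚⟩)^{−1} ∫_{ℝⁿ} e^{−i⟨x,v⟩} ( Φ(v + i𝐚) + Φ(v − i𝐚) ) dv. -/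

import Mathlib

open MeasureTheory Complex

/-!
For fixed `x` the function `G z = exp (-i⟨x, z⟩) Φ z` is holomorphic in the tube and tends to `0` at
infinity in it, so by Cauchy's theorem `∫ G (v + iw) dv` has the same value for `w = 0` and
`w = ±a`. Since `G (v + iw) = exp ⟨x, w⟩ exp (-i⟨x, v⟩) Φ (v + iw)`, moving the contour to `±a`
multiplies the Fourier integral of `Φ` by `exp (∓⟨x, a⟩)`, and adding the two identities produces
`2 cosh ⟨x, a⟩`.

The contour is moved from `w` to `w'` in a single step, along the complex lines
`v + iw + ζ (w' - w)` with `0 ≤ Im ζ ≤ 1`, so only the tube over the segment between `w` and `w'`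
is visited.
-/

open Filter Topology Set Matrix

section StripShift

variable {E : Type*} [NormedAddCommGroup E] [NormedSpace ℂ E] {f : ℂ → E} {b c : ℝ}

theorem tendsto_integral_vertical_cocompact
    (hdecay : Tendsto f (comap re (cocompact ℝ) ⊓ 𝓟 (im ⁻¹' uIcc b c)) (𝓝 0)) :
    Tendsto (fun t : ℝ ↦ ∫ y in b..c, f (t + y * I)) (cocompact ℝ) (𝓝 0) := by
  rw [Metric.tendsto_nhds]
  intro ε hε
  have hδ : 0 < ε / (|c - b| + 1) := by positivity
  have hsmall := Metric.tendsto_nhds.1 hdecay _ hδ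
  rw [eventually_inf_principal, eventually_comap] at hsmall
  filter_upwards [hsmall] with t ht
  have hbound : ∀ y ∈ uIoc b c, ‖f (t + y * I)‖ ≤ ε / (|c - b| + 1) := fun y hy ↦ by
    simpa using (ht (t + y * I) (by simp) (by simpa using uIoc_subset_uIcc hy)).le
  calc dist (∫ y in b..c, f (t + y * I)) 0
      ≤ ε / (|c - b| + 1) * |c - b| := by
        simpa using intervalIntegral.norm_integral_le_of_norm_le_const hbound
    _ < ε / (|c - b| + 1) * (|c - b| + 1) := by gcongr; linarith
    _ = ε := by field_simp

theorem integral_horizontal_eq_of_differentiableOn_strip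
    (hf : DifferentiableOn ℂ f (im ⁻¹' uIcc b c))
    (hdecay : Tendsto f (comap re (cocompact ℝ) ⊓ 𝓟 (im ⁻¹' uIcc b c)) (𝓝 0))
    (hb : Integrable fun t : ℝ ↦ f (t + b * I)) (hc : Integrable fun t : ℝ ↦ f (t + c * I)) :
    ∫ t : ℝ, f (t + b * I) = ∫ t : ℝ, f (t + c * I) := by
  have hcauchy (R : ℝ) :
      (∫ t in -R..R, f (t + b * I)) - ∫ t in -R..R, f (t + c * I) =
        I • (∫ y in b..c, f ((-R : ℝ) + y * I)) - I • ∫ y in b..c, f (R + y * I) := by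
    have hrect := integral_boundary_rect_eq_zero_of_differentiableOn f ⟨-R, b⟩ ⟨R, c⟩
      (hf.mono inter_subset_right)
    rw [← sub_eq_zero, ← hrect]
    abel
  have hhorizontal := (intervalIntegral_tendsto_integral hb tendsto_neg_atTop_atBot tendsto_id).sub
    (intervalIntegral_tendsto_integral hc tendsto_neg_atTop_atBot tendsto_id)
  have hvertical := tendsto_integral_vertical_cocompact hdecay
  have hleft := hvertical.comp (tendsto_neg_atTop_atBot.mono_right atBot_le_cocompact)
  have hright := hvertical.mono_left atTop_le_cocompact
  have hsides := (hleft.const_smul I).sub (hright.const_smul I)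
  rw [smul_zero, sub_zero] at hsides
  exact sub_eq_zero.1 (tendsto_nhds_unique hhorizontal (hsides.congr fun R ↦ (hcauchy R).symm))

end StripShift

section LineFubini

variable {V : Type*} [AddCommGroup V] [Module ℝ V] [MeasurableSpace V] [MeasurableAdd₂ V]
  [MeasurableSMul ℝ V] {μ : Measure V} [SFinite μ] [μ.IsAddRightInvariant] {b : V} {ℓ : V →ₗ[ℝ] ℝ}

-- For each `u`, the parameters `t` for which `u - t • b` lies in the slab `0 ≤ ℓ < 1` form an
-- interval of length `1`.
theorem measurePreserving_add_smul_slab (hℓ : Measurable ℓ) (hb : ℓ b = 1) :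
    MeasurePreserving (fun q : V × ℝ ↦ q.1 + q.2 • b)
      ((μ.restrict (ℓ ⁻¹' Ico 0 1)).prod volume) μ := by
  have hmeas : Measurable fun q : V × ℝ ↦ q.1 + q.2 • b := by fun_prop
  refine ⟨hmeas, Measure.ext fun A hA ↦ ?_⟩
  let B : Set (V × ℝ) := {q | q.1 ∈ A ∧ ℓ q.1 - q.2 ∈ Ico 0 1}
  have hB : MeasurableSet B :=
    (measurable_fst hA).inter (((hℓ.comp measurable_fst).sub measurable_snd) measurableSet_Ico)
  have htranslate (t : ℝ) :
      μ.restrict (ℓ ⁻¹' Ico 0 1) ((fun v ↦ v + t • b) ⁻¹' A) = μ {u | (u, t) ∈ B} := by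
    rw [Measure.restrict_apply ((measurable_add_const _) hA),
      ← measure_preimage_add_right μ (t • b) {u | (u, t) ∈ B}]
    congr 1
    ext v
    simp only [B, mem_inter_iff, mem_preimage, mem_ofPred_eq, map_add, map_smul, hb, smul_eq_mul,
      mul_one, add_sub_cancel_right]
  have hfibre (u : V) : volume (Prod.mk u ⁻¹' B) = A.indicator 1 u := by
    by_cases hu : u ∈ A
    · have : Prod.mk u ⁻¹' B = Ioc (ℓ u - 1) (ℓ u) := by
        ext t
        simp only [B, mem_preimage, mem_ofPred_eq, hu, true_and, mem_Ico, mem_Ioc]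
        constructor <;> rintro ⟨h₁, h₂⟩ <;> constructor <;> linarith
      simp [this, hu]
    · simp [B, hu]
  calc ((μ.restrict (ℓ ⁻¹' Ico 0 1)).prod volume).map (fun q : V × ℝ ↦ q.1 + q.2 • b) A
      = ∫⁻ t, μ.restrict (ℓ ⁻¹' Ico 0 1) ((fun v ↦ v + t • b) ⁻¹' A) := by
        rw [Measure.map_apply hmeas hA, Measure.prod_apply_symm (hmeas hA)]
        rfl
    _ = ∫⁻ t, μ {u | (u, t) ∈ B} := lintegral_congr htranslate
    _ = ∫⁻ u, volume (Prod.mk u ⁻¹' B) ∂μ := by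
        rw [← Measure.prod_apply hB, Measure.prod_apply_symm hB]
        rfl
    _ = μ A := by simp_rw [hfibre, lintegral_indicator_one hA]

variable {E : Type*} [NormedAddCommGroup E] [NormedSpace ℝ E]

theorem integral_eq_setIntegral_slab_integral_line {f : V → E} (hℓ : Measurable ℓ) (hb : ℓ b = 1)
    (hf : Integrable f μ) :
    ∫ v, f v ∂μ = ∫ v in ℓ ⁻¹' Ico 0 1, (∫ t : ℝ, f (v + t • b)) ∂μ := by
  have hslab := measurePreserving_add_smul_slab (μ := μ) hℓ hb
  have hmap : ∫ v, f v ∂μ =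
      ∫ q : V × ℝ, f (q.1 + q.2 • b) ∂(μ.restrict (ℓ ⁻¹' Ico 0 1)).prod volume := by
    conv_lhs => rw [← hslab.map_eq]
    exact integral_map hslab.aemeasurable (by rw [hslab.map_eq]; exact hf.aestronglyMeasurable)
  exact hmap.trans (integral_prod _ (hslab.integrable_comp_of_integrable hf))

theorem integral_eq_of_integral_line_eq {f g : V → E} (hℓ : Measurable ℓ) (hb : ℓ b = 1)
    (hf : Integrable f μ) (hg : Integrable g μ)
    (hline : ∀ v, Integrable (fun t : ℝ ↦ f (v + t • b)) → Integrable (fun t : ℝ ↦ g (v + t • b)) →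
      ∫ t : ℝ, f (v + t • b) = ∫ t : ℝ, g (v + t • b)) :
    ∫ v, f v ∂μ = ∫ v, g v ∂μ := by
  have hslab := measurePreserving_add_smul_slab (μ := μ) hℓ hb
  rw [integral_eq_setIntegral_slab_integral_line hℓ hb hf,
    integral_eq_setIntegral_slab_integral_line hℓ hb hg]
  refine integral_congr_ae ?_
  filter_upwards [(hslab.integrable_comp_of_integrable hf).prod_right_ae,
    (hslab.integrable_comp_of_integrable hg).prod_right_ae] with v using hline v

end LineFubini

section Tube

variable {ι : Type*}

/-- The vector `v + iw` of `ℂⁿ` with real part `v` and imaginary part `w`, where the index type `ι`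
plays the role of `{1, …, n}`. -/
def complexVec (v w : ι → ℝ) : ι → ℂ := fun k ↦ v k + I * w k

/-- The tube `ℝⁿ + iS` over a base `S ⊆ ℝⁿ`. -/
def tube (S : Set (ι → ℝ)) : Set (ι → ℂ) := {z | (fun k ↦ (z k).im) ∈ S}

/-- The filter of neighbourhoods of infinity in the tube over `S`: convergence along it is
convergence as `‖Re z‖ → ∞`, uniformly in `Im z ∈ S`. -/
def tubeInfty (S : Set (ι → ℝ)) : Filter (ι → ℂ) :=
  comap (fun z k ↦ (z k).re) (cocompact (ι → ℝ)) ⊓ 𝓟 (tube S)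

theorem complexVec_zero (v : ι → ℝ) : complexVec v 0 = fun k ↦ (v k : ℂ) := by
  funext k
  simp [complexVec]

theorem complexVec_neg (v w : ι → ℝ) : complexVec v (-w) = fun k ↦ v k - I * w k := by
  funext k
  simp [complexVec, sub_eq_add_neg]

theorem re_complexVec (v w : ι → ℝ) : (fun k ↦ (complexVec v w k).re) = v := by
  simp [complexVec]

theorem im_complexVec (v w : ι → ℝ) : (fun k ↦ (complexVec v w k).im) = w := by
  simp [complexVec]

theorem complexVec_mem_tube {S : Set (ι → ℝ)} {v w : ι → ℝ} : complexVec v w ∈ tube S ↔ w ∈ S := by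
  rw [tube, mem_ofPred_eq, im_complexVec]

theorem mem_tube_Icc {a b : ι → ℝ} {z : ι → ℂ} :
    z ∈ tube (Icc a b) ↔ ∀ k, a k ≤ (z k).im ∧ (z k).im ≤ b k := by
  simp only [tube, mem_ofPred_eq, mem_Icc, Pi.le_def, forall_and]

theorem complexVec_add_smul (v w b : ι → ℝ) (z : ℂ) :
    complexVec (v + z.re • b) (w + z.im • b) = complexVec v w + z • fun k ↦ (b k : ℂ) := by
  funext k
  apply Complex.ext <;> simp [complexVec]

theorem tube_mono {S S' : Set (ι → ℝ)} (h : S ⊆ S') : tube S ⊆ tube S' := fun _ hz ↦ h hz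

theorem tendsto_complexVec_line_tubeInfty {S : Set (ι → ℝ)} {s : Set ℝ} {w b : ι → ℝ} (hb : b ≠ 0)
    (hs : ∀ t ∈ s, w + t • b ∈ S) (v : ι → ℝ) :
    Tendsto (fun z : ℂ ↦ complexVec (v + z.re • b) (w + z.im • b))
      (comap re (cocompact ℝ) ⊓ 𝓟 (im ⁻¹' s)) (tubeInfty S) := by
  have hline : Tendsto (fun t : ℝ ↦ v + t • b) (cocompact ℝ) (cocompact (ι → ℝ)) :=
    (Homeomorph.addLeft v).isClosedEmbedding.tendsto_cocompact.comp
      (isClosedEmbedding_smul_left hb).tendsto_cocompact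
  refine tendsto_inf.2 ⟨tendsto_comap_iff.2 ?_, tendsto_principal.2 ?_⟩
  · refine ((hline.comp tendsto_comap).mono_left inf_le_left).congr fun z ↦ ?_
    exact (re_complexVec _ _).symm
  · filter_upwards [mem_inf_of_right (mem_principal_self _)] with z hz
    exact complexVec_mem_tube.2 (hs _ hz)

variable [Fintype ι]

theorem tendsto_sqrt_sum_sq_cocompact :
    Tendsto (fun v : ι → ℝ ↦ √(∑ k, v k ^ 2)) (cocompact (ι → ℝ)) atTop := by
  refine tendsto_atTop_mono (fun v ↦ ?_) (tendsto_norm_cocompact_atTop (E := ι → ℝ))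
  refine (pi_norm_le_iff_of_nonneg (Real.sqrt_nonneg _)).2 fun k ↦ Real.abs_le_sqrt ?_
  exact Finset.single_le_sum (f := fun j ↦ v j ^ 2) (fun j _ ↦ sq_nonneg _) (Finset.mem_univ k)

theorem tendsto_tubeInfty_zero_of_forall_norm_lt {E : Type*} [SeminormedAddCommGroup E]
    {S : Set (ι → ℝ)} {Φ : (ι → ℂ) → E}
    (h : ∀ ε > (0 : ℝ), ∃ R : ℝ, ∀ z ∈ tube S, R ≤ √(∑ k, (z k).re ^ 2) → ‖Φ z‖ < ε) :
    Tendsto Φ (tubeInfty S) (𝓝 0) := by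
  rw [Metric.tendsto_nhds]
  intro ε hε
  obtain ⟨R, hR⟩ := h ε hε
  have hlarge : ∀ᶠ z in comap (fun (z : ι → ℂ) k ↦ (z k).re) (cocompact (ι → ℝ)),
      R ≤ √(∑ k, (z k).re ^ 2) :=
    (tendsto_sqrt_sum_sq_cocompact.comp tendsto_comap).eventually_ge_atTop R
  refine eventually_inf_principal.2 (hlarge.mono fun z hz hzS ↦ ?_)
  simpa using hR z hzS hz

theorem integral_complexVec_eq_of_convex {E : Type*} [NormedAddCommGroup E] [NormedSpace ℂ E]
    {S : Set (ι → ℝ)} (hS : Convex ℝ S) {G : (ι → ℂ) → E} (hG : DifferentiableOn ℂ G (tube S))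
    (hdecay : Tendsto G (tubeInfty S) (𝓝 0)) {w w' : ι → ℝ} (hw : w ∈ S) (hw' : w' ∈ S)
    (hint : Integrable fun v ↦ G (complexVec v w))
    (hint' : Integrable fun v ↦ G (complexVec v w')) :
    ∫ v, G (complexVec v w) = ∫ v, G (complexVec v w') := by
  rcases eq_or_ne w w' with rfl | hne
  · rfl
  set b := w' - w
  have hb : b ≠ 0 := sub_ne_zero.2 hne.symm
  obtain ⟨k, hk⟩ := Function.ne_iff.1 hb
  have hsegment : ∀ t ∈ uIcc (0 : ℝ) 1, w + t • b ∈ S := fun t ht ↦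
    hS.add_smul_sub_mem hw hw' (by rwa [uIcc_of_le zero_le_one] at ht)
  refine integral_eq_of_integral_line_eq (b := b) (ℓ := (b k)⁻¹ • LinearMap.proj k)
    ((measurable_pi_apply k).const_smul (b k)⁻¹) (inv_mul_cancel₀ hk) hint hint' fun v hv hv' ↦ ?_
  let line : ℂ → ι → ℂ := fun z ↦ complexVec (v + z.re • b) (w + z.im • b)
  have hline : Differentiable ℂ line := by
    simp only [line, complexVec_add_smul]
    fun_prop
  have hmaps : MapsTo line (im ⁻¹' uIcc 0 1) (tube S) := fun z hz ↦
    complexVec_mem_tube.2 (hsegment _ hz)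
  have hbottom (t : ℝ) : line (t + (0 : ℝ) * I) = complexVec (v + t • b) w := by simp [line]
  have htop (t : ℝ) : line (t + (1 : ℝ) * I) = complexVec (v + t • b) w' := by simp [line, b]
  simpa only [Function.comp_apply, hbottom, htop] using
    integral_horizontal_eq_of_differentiableOn_strip (f := G ∘ line) (b := 0) (c := 1)
      (hG.comp hline.differentiableOn hmaps)
      (hdecay.comp (tendsto_complexVec_line_tubeInfty hb hsegment v))
      (by simpa only [Function.comp_apply, hbottom]) (by simpa only [Function.comp_apply, htop])

end Tube

section Fourier

variable {ι : Type*} [Fintype ι]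

/-- The plane wave `exp (-i⟨x, z⟩)` of real frequency `x`, an entire function of `z ∈ ℂⁿ`. -/
noncomputable def planeWave (x : ι → ℝ) (z : ι → ℂ) : ℂ := exp (-I * ∑ k, x k * z k)

theorem differentiable_planeWave (x : ι → ℝ) : Differentiable ℂ (planeWave x) := by
  unfold planeWave
  fun_prop

theorem norm_planeWave (x : ι → ℝ) (z : ι → ℂ) :
    ‖planeWave x z‖ = Real.exp (x ⬝ᵥ fun k ↦ (z k).im) := by
  simp [planeWave, norm_exp, dotProduct]

theorem planeWave_complexVec (x v w : ι → ℝ) :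
    planeWave x (complexVec v w) = exp (x ⬝ᵥ w : ℝ) * exp (-I * (x ⬝ᵥ v : ℝ)) := by
  rw [planeWave, ← Complex.exp_add]
  congr 1
  simp only [complexVec, dotProduct, ofReal_sum, ofReal_mul, Finset.mul_sum,
    ← Finset.sum_add_distrib]
  refine Finset.sum_congr rfl fun k _ ↦ ?_
  linear_combination (-(x k : ℂ) * w k) * I_mul_I

theorem isBoundedUnder_norm_planeWave_tubeInfty {S : Set (ι → ℝ)} (hS : Bornology.IsBounded S)
    (x : ι → ℝ) : IsBoundedUnder (· ≤ ·) (tubeInfty S) (norm ∘ planeWave x) := by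
  have hcont : Continuous fun w : ι → ℝ ↦ Real.exp (x ⬝ᵥ w) := by fun_prop
  obtain ⟨C, hC⟩ := hS.isCompact_closure.bddAbove_image hcont.continuousOn
  refine isBoundedUnder_of_eventually_le (a := C) ?_
  filter_upwards [mem_inf_of_right (mem_principal_self _)] with z hz
  rw [Function.comp_apply, norm_planeWave]
  exact hC (mem_image_of_mem _ (subset_closure hz))

theorem integrable_exp_mul {x : ι → ℝ} {g : (ι → ℝ) → ℂ} (hg : Integrable g) :
    Integrable fun v ↦ exp (-I * (x ⬝ᵥ v : ℝ)) * g v := by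
  refine hg.bdd_mul (c := 1) (Continuous.aestronglyMeasurable (by fun_prop)) (.of_forall fun v ↦ ?_)
  simp [norm_exp]

theorem integral_exp_mul_complexVec {S : Set (ι → ℝ)} (hS : Convex ℝ S)
    (hS' : Bornology.IsBounded S) {Φ : (ι → ℂ) → ℂ} (hol : DifferentiableOn ℂ Φ (tube S))
    (hdecay : Tendsto Φ (tubeInfty S) (𝓝 0)) {w w' : ι → ℝ} (hw : w ∈ S) (hw' : w' ∈ S)
    (hint : Integrable fun v ↦ Φ (complexVec v w)) (hint' : Integrable fun v ↦ Φ (complexVec v w'))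
    (x : ι → ℝ) :
    exp (x ⬝ᵥ w : ℝ) * ∫ v, exp (-I * (x ⬝ᵥ v : ℝ)) * Φ (complexVec v w) =
      exp (x ⬝ᵥ w' : ℝ) * ∫ v, exp (-I * (x ⬝ᵥ v : ℝ)) * Φ (complexVec v w') := by
  have hshift := integral_complexVec_eq_of_convex (G := fun z ↦ planeWave x z * Φ z) hS
    ((differentiable_planeWave x).differentiableOn.mul hol)
    ((isBoundedUnder_norm_planeWave_tubeInfty hS' x).smul_tendsto_zero hdecay) hw hw'
  simp only [planeWave_complexVec, mul_assoc, integral_const_mul] at hshift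
  exact hshift ((integrable_exp_mul hint).const_mul _) ((integrable_exp_mul hint').const_mul _)

theorem integral_exp_mul_add_eq_cosh_mul {a : ι → ℝ} {Φ : (ι → ℂ) → ℂ}
    (hol : DifferentiableOn ℂ Φ (tube (segment ℝ (-a) a)))
    (hdecay : Tendsto Φ (tubeInfty (segment ℝ (-a) a)) (𝓝 0))
    (hint : ∀ w ∈ ({0, a, -a} : Set (ι → ℝ)), Integrable fun v ↦ Φ (complexVec v w)) (x : ι → ℝ) :
    ∫ v, exp (-I * (x ⬝ᵥ v : ℝ)) * (Φ (complexVec v a) + Φ (complexVec v (-a))) =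
      2 * Real.cosh (x ⬝ᵥ a) * ∫ v : ι → ℝ, exp (-I * (x ⬝ᵥ v : ℝ)) * Φ fun k ↦ (v k : ℂ) := by
  have hzero : (0 : ι → ℝ) ∈ segment ℝ (-a) a :=
    ⟨1 / 2, 1 / 2, by norm_num, by norm_num, by norm_num, by simp⟩
  have hbounded : Bornology.IsBounded (segment ℝ (-a) a) := by
    rw [← convexHull_pair]
    exact isBounded_convexHull.2 (toFinite _).isBounded
  have hshift {w : ι → ℝ} (hw : w ∈ segment ℝ (-a) a)
      (hwint : Integrable fun v ↦ Φ (complexVec v w)) :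
      ∫ v, exp (-I * (x ⬝ᵥ v : ℝ)) * Φ (complexVec v w) =
        exp (-(x ⬝ᵥ w : ℝ)) * ∫ v : ι → ℝ, exp (-I * (x ⬝ᵥ v : ℝ)) * Φ fun k ↦ (v k : ℂ) := by
    have h := integral_exp_mul_complexVec (convex_segment (-a) a) hbounded hol hdecay hw hzero hwint
      (hint 0 (by simp)) x
    simp only [dotProduct_zero, ofReal_zero, Complex.exp_zero, one_mul, complexVec_zero] at h
    rw [← h, ← mul_assoc, ← Complex.exp_add, neg_add_cancel, Complex.exp_zero, one_mul]
  have hinta := hint a (by simp)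
  have hintna := hint (-a) (by simp)
  simp_rw [mul_add]
  rw [integral_add (integrable_exp_mul hinta) (integrable_exp_mul hintna),
    hshift (right_mem_segment ℝ _ _) hinta, hshift (left_mem_segment ℝ _ _) hintna, ← add_mul,
    ofReal_cosh, two_cosh, dotProduct_neg, ofReal_neg, neg_neg, add_comm (exp _)]

theorem density_cosh_representation_general {a : ι → ℝ} {Φ : (ι → ℂ) → ℂ}
    (hol : DifferentiableOn ℂ Φ (tube (segment ℝ (-a) a)))
    (hint : ∀ w ∈ ({0, a, -a} : Set (ι → ℝ)), Integrable fun v ↦ Φ (complexVec v w))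
    (hdecay : Tendsto Φ (tubeInfty (segment ℝ (-a) a)) (𝓝 0)) {p : (ι → ℝ) → ℂ}
    (hp : ∀ x, p x = (((2 * Real.pi) ^ Fintype.card ι)⁻¹ : ℝ) *
      ∫ v : ι → ℝ, exp (-I * (x ⬝ᵥ v : ℝ)) * Φ fun k ↦ (v k : ℂ)) (x : ι → ℝ) :
    p x = ((1 / (2 * (2 * Real.pi) ^ Fintype.card ι)) : ℝ) * (Real.cosh (x ⬝ᵥ a) : ℝ)⁻¹ *
      ∫ v, exp (-I * (x ⬝ᵥ v : ℝ)) * (Φ (complexVec v a) + Φ (complexVec v (-a))) := by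
  have hcosh : (Real.cosh (x ⬝ᵥ a) : ℂ) ≠ 0 := ofReal_ne_zero.2 (Real.cosh_pos _).ne'
  rw [hp, integral_exp_mul_add_eq_cosh_mul hol hdecay hint x, one_div, mul_inv, ofReal_mul]
  push_cast at hcosh ⊢
  field_simp

end Fourier

theorem density_cosh_representation
    (n : ℕ) (hn : 1 ≤ n) (a : ℝ) (ha : 0 < a)
    (Φ : (Fin n → ℂ) → ℂ) (T : Set (Fin n → ℂ))
    (hT : T = {z : Fin n → ℂ | ∀ k, -a ≤ (z k).im ∧ (z k).im ≤ a})
    (hol : ∃ U : Set (Fin n → ℂ), IsOpen U ∧ T ⊆ U ∧ DifferentiableOn ℂ Φ U)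
    (hint : ∀ w : Fin n → ℝ, (∀ k, w k ∈ Set.Icc (-a) a) →
      Integrable (fun v : Fin n → ℝ => Φ (fun k => (v k : ℂ) + Complex.I * (w k : ℂ))))
    (hdecay : ∀ ε > (0 : ℝ), ∃ R : ℝ, ∀ z ∈ T,
      R ≤ Real.sqrt (∑ k, (z k).re ^ 2) → ‖Φ z‖ < ε)
    (p : (Fin n → ℝ) → ℂ)
    (hp : ∀ x : Fin n → ℝ, p x =
      (((2 * Real.pi) ^ n)⁻¹ : ℝ) *
        ∫ v : Fin n → ℝ,
          Complex.exp (-Complex.I * (∑ k, x k * v k : ℝ)) * Φ (fun k => (v k : ℂ))) :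
    ∀ x : Fin n → ℝ, p x =
      ((1 / (2 * (2 * Real.pi) ^ n)) : ℝ) *
        ((Real.cosh (∑ k, x k * a) : ℝ))⁻¹ *
        ∫ v : Fin n → ℝ,
          Complex.exp (-Complex.I * (∑ k, x k * v k : ℝ)) *
            (Φ (fun k => (v k : ℂ) + Complex.I * (a : ℂ))
              + Φ (fun k => (v k : ℂ) - Complex.I * (a : ℂ))) := by
  intro x
  obtain ⟨U, -, hTU, hΦ⟩ := hol
  let b : Fin n → ℝ := fun _ ↦ a
  have hsegment : segment ℝ (-b) b ⊆ Icc (-b) b := segment_subset_Icc fun _ ↦ neg_le_self ha.le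
  have htube : tube (segment ℝ (-b) b) ⊆ T := fun z hz ↦
    hT ▸ mem_tube_Icc.1 (tube_mono hsegment hz)
  have hslices : ∀ w ∈ ({0, b, -b} : Set (Fin n → ℝ)),
      Integrable fun v ↦ Φ (complexVec v w) := by
    rintro w (rfl | rfl | rfl) <;> exact hint _ fun _ ↦ by simp [b, ha.le]
  have hvanish : Tendsto Φ (tubeInfty (segment ℝ (-b) b)) (𝓝 0) :=
    tendsto_tubeInfty_zero_of_forall_norm_lt fun ε hε ↦
      (hdecay ε hε).imp fun _ hR z hz ↦ hR z (htube hz)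
  have hgeneral := density_cosh_representation_general (hΦ.mono (htube.trans hTU)) hslices hvanish
    (by simpa only [Fintype.card_fin, dotProduct] using hp) x
  simp only [Fintype.card_fin, complexVec_neg] at hgeneral
  exact hgeneral
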